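/- arXiv:2306.14075 — 4 statements merged into one kernel-verified Lean document; each statement's English description precedes it below -/
import Mathlib

section
/- Let X be a finite variable set and let h = ∑_{V ⊆ X} α_V·h^V be a normal polymatroid on X, where all α_V ≥ 0 and exactly c of the coefficients α_V are nonzero. Then there exists a totally uniform finite relation T with attribute set X such that |T| ≥ 2^{h(X)} / 2^c and, for all U, V ⊆ X, h_T(V|U) ≤ h(V|U), where h_T is the entropic vector of the uniform distribution on T. -/
open scoped BigOperators ENNReal

namespace JoinBounds

noncomputable section

variable {A α : Type*}

/-- The projection of a tuple `t : A → α` onto the attribute set `U`, represented as a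
partial tuple. -/
def proj [DecidableEq A] (U : Finset A) (t : A → α) : A → Option α :=
  fun x => if x ∈ U then some (t x) else none

/-- The projection of a relation `R` onto the attribute set `U`. -/
def projR [Fintype A] [DecidableEq A] [DecidableEq α] (U : Finset A) (R : Finset (A → α)) :
    Finset (A → Option α) :=
  R.image (proj U)

/-- The degree of a `U`-tuple `u` in `R`: the number of distinct `V`-tuples
appearing in `R` together with `u`. -/
def deg [Fintype A] [DecidableEq A] [DecidableEq α] (U V : Finset A) (R : Finset (A → α))
    (u : A → Option α) : ℕ :=
  (projR V (R.filter fun t => proj U t = u)).card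

/-- The `ℓ_p`-norm of the degree sequence `deg_R(V|U)`, for `p ∈ (0, ∞]`. -/
def lpNorm [Fintype A] [DecidableEq A] [DecidableEq α] (U V : Finset A) (R : Finset (A → α))
    (p : ℝ≥0∞) : ℝ :=
  if p = ⊤ then (((projR U R).sup fun u => deg U V R u : ℕ) : ℝ)
  else (∑ u ∈ projR U R, (deg U V R u : ℝ) ^ p.toReal) ^ (1 / p.toReal)

/-- The marginal probability, on the attribute set `W`, of the partial tuple `w`, under a
probability distribution `P` on the tuples of `R`. -/
def marg [Fintype A] [DecidableEq A] [DecidableEq α] (P : (A → α) → ℝ) (R : Finset (A → α))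
    (W : Finset A) (w : A → Option α) : ℝ :=
  ∑ t ∈ R.filter fun t => proj W t = w, P t

/-- The (base-2 Shannon) entropy of the marginal on the attribute set `W` of the
distribution `P` on the tuples of `R`: this is the entropic vector `h(W)`. -/
def entropy [Fintype A] [DecidableEq A] [DecidableEq α] (P : (A → α) → ℝ) (R : Finset (A → α))
    (W : Finset A) : ℝ :=
  -∑ w ∈ projR W R, marg P R W w * Real.logb 2 (marg P R W w)

/-- The step function `h^W`. -/
def stepFn {A : Type*} [DecidableEq A] (W : Finset A) : Finset A → ℝ :=
  fun U => if (U ∩ W).Nonempty then 1 else 0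

end

/-!
Give every `W` an independent parameter `s_W` ranging over `⌊2 ^ α_W⌋` values, and let the
attribute `x` record exactly those `s_W` with `x ∈ W`. The projection onto `U` then reveals
precisely the parameters of the sets `W` meeting `U`, so the entropic vector of this relation is
`∑_W log₂ ⌊2 ^ α_W⌋ · h^W`. Rounding only decreases the coefficients, hence also the conditional
terms because step functions are monotone; and it costs at most one bit per nonzero coefficient.
-/

open Finset
open Fintype (piFinset mem_piFinset piFinset_subset piFinset_nonempty)

section UniformEntropy

variable {A β : Type*} [Fintype A] [DecidableEq A] [DecidableEq β]

/-- The entropic vector `h_T` of the uniform distribution on the relation `T`. It is reducible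
because the theorem spells it out. -/
noncomputable abbrev entropicVector (T : Finset (A → β)) (W : Finset A) : ℝ :=
  entropy (fun t => if t ∈ T then ((T.card : ℝ))⁻¹ else 0) T W

theorem marg_uniform (T : Finset (A → β)) (W : Finset A) (w : A → Option β) :
    marg (fun t => if t ∈ T then ((T.card : ℝ))⁻¹ else 0) T W w =
      #{t ∈ T | proj W t = w} / #T := by
  rw [marg, sum_congr rfl fun t ht => if_pos (mem_filter.1 ht).1, sum_const, nsmul_eq_mul,
    div_eq_mul_inv]

theorem card_projR_univ (T : Finset (A → β)) : #(projR univ T) = #T := by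
  refine card_image_of_injective T fun t t' h => funext fun x => ?_
  simpa only [proj, mem_univ, if_true, Option.some.injEq] using congrFun h x

theorem entropicVector_eq_logb_card_projR {T : Finset (A → β)} {W : Finset A} {k : ℕ}
    (hk : ∀ w ∈ projR W T, #{t ∈ T | proj W t = w} = k) :
    entropicVector T W = Real.logb 2 #(projR W T) := by
  obtain rfl | hT := T.eq_empty_or_nonempty
  · simp [entropy, projR]
  have card_eq : (#(projR W T) * k : ℝ) = #T := by
    rw [card_eq_sum_card_image (proj W) T, ← projR, sum_congr rfl hk, sum_const, smul_eq_mul,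
      Nat.cast_mul]
  have card_ne_zero : (#(projR W T) * k : ℝ) ≠ 0 := card_eq ▸ Nat.cast_ne_zero.2 hT.card_ne_zero
  have hproj : (#(projR W T) : ℝ) ≠ 0 := left_ne_zero_of_mul card_ne_zero
  have marg_eq : ∀ w ∈ projR W T,
      marg (fun t => if t ∈ T then ((T.card : ℝ))⁻¹ else 0) T W w = (#(projR W T) : ℝ)⁻¹ := by
    intro w hw
    rw [marg_uniform, hk w hw, ← card_eq, div_mul_cancel_right₀ (right_ne_zero_of_mul card_ne_zero)]
  rw [entropicVector, entropy, sum_congr rfl fun w hw => by rw [marg_eq w hw], sum_const,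
    nsmul_eq_mul, mul_inv_cancel_left₀ hproj, Real.logb_inv, neg_neg]

end UniformEntropy

theorem card_image_piFinset_of_eq_iff {ι κ : Type*} {π : ι → Type*} [Fintype ι] [DecidableEq ι]
    [DecidableEq κ] {f : (∀ i, π i) → κ} {p : ι → Prop} [DecidablePred p]
    (hf : ∀ s s', f s = f s' ↔ ∀ i, p i → s i = s' i)
    {B : ∀ i, Finset (π i)} (hB : ∀ i, (B i).Nonempty) :
    #((piFinset B).image f) = ∏ i, if p i then #(B i) else 1 := by
  choose b hb using hB
  -- Fixing the coordinates that `f` ignores keeps its image and makes it injective.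
  let restricted : ∀ i, Finset (π i) := fun i => if p i then B i else {b i}
  have image_eq : (piFinset B).image f = (piFinset restricted).image f := by
    refine Subset.antisymm ?_ (image_subset_image <| piFinset_subset _ _ fun i => ?_)
    · refine image_subset_iff.2 fun s hs => mem_image.2 ⟨fun i => if p i then s i else b i, ?_, ?_⟩
      · refine mem_piFinset.2 fun i => ?_
        by_cases hi : p i
        · simpa only [restricted, if_pos hi] using mem_piFinset.1 hs i
        · simp only [restricted, if_neg hi, mem_singleton]
      · exact (hf _ _).2 fun i hi => if_pos hi
    · by_cases hi : p i
      · simp only [restricted, if_pos hi, Subset.refl]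
      · simpa only [restricted, if_neg hi, singleton_subset_iff] using hb i
  have injOn : Set.InjOn f (piFinset restricted) := by
    intro s hs s' hs' h
    funext i
    by_cases hi : p i
    · exact (hf s s').1 h i hi
    · have hsi := mem_piFinset.1 hs i
      have hsi' := mem_piFinset.1 hs' i
      simp only [restricted, if_neg hi, mem_singleton] at hsi hsi'
      rw [hsi, hsi']
  rw [image_eq, card_image_of_injOn injOn, Fintype.card_piFinset]
  exact prod_congr rfl fun i _ => by simp only [restricted, apply_ite card, card_singleton]

section NormalRelation

variable {A ι γ : Type*} [DecidableEq A] [Zero γ]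

/-- The tuple with parameters `s`: the attribute `x` records the parameters `s i` of the sets
`S i` containing it, the other ones being masked by `0`. -/
def normalTuple (S : ι → Finset A) (s : ι → γ) : A → ι → γ :=
  fun x i => if x ∈ S i then s i else 0

theorem proj_normalTuple_eq_iff {S : ι → Finset A} {U : Finset A} {s s' : ι → γ} :
    proj U (normalTuple S s) = proj U (normalTuple S s') ↔
      ∀ i, (U ∩ S i).Nonempty → s i = s' i := by
  constructor
  · rintro h i ⟨x, hx⟩
    obtain ⟨hxU, hxS⟩ := mem_inter.1 hx
    have hx_eq := congrFun h x
    simp only [proj, if_pos hxU, Option.some.injEq] at hx_eq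
    simpa only [normalTuple, if_pos hxS] using congrFun hx_eq i
  · intro h
    funext x
    refine ite_congr rfl (fun hxU => congrArg some <| funext fun i => ?_) fun _ => rfl
    exact ite_congr rfl (fun hxS => h i ⟨x, mem_inter.2 ⟨hxU, hxS⟩⟩) fun _ => rfl

variable [Fintype A] [Fintype ι] [DecidableEq ι] [DecidableEq γ]

/-- The normal relation with supports `S i`, whose parameters range independently over the
`B i`. It is the domain product, over `i`, of the relations consisting of the tuples that are
constant on `S i`, with value in `B i`, and `0` elsewhere. -/
def normalRelation (S : ι → Finset A) (B : ι → Finset γ) : Finset (A → ι → γ) :=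
  (piFinset B).image (normalTuple S)

variable {S : ι → Finset A} {B : ι → Finset γ}

theorem card_projR_normalRelation (hB : ∀ i, (B i).Nonempty) (U : Finset A) :
    #(projR U (normalRelation S B)) = ∏ i, if (U ∩ S i).Nonempty then #(B i) else 1 := by
  rw [projR, normalRelation, image_image]
  exact card_image_piFinset_of_eq_iff (fun _ _ => proj_normalTuple_eq_iff) hB

theorem filter_proj_normalRelation {s : ι → γ} (hs : s ∈ piFinset B) (U : Finset A) :
    {t ∈ normalRelation S B | proj U t = proj U (normalTuple S s)} =
      normalRelation S fun i => if (U ∩ S i).Nonempty then {s i} else B i := by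
  rw [normalRelation, normalRelation, filter_image]
  congr 1
  ext r
  simp only [mem_filter, mem_piFinset, proj_normalTuple_eq_iff] at hs ⊢
  rw [← forall_and]
  refine forall_congr' fun i => ?_
  split_ifs with hi
  · simp only [hi, true_imp_iff, mem_singleton, and_iff_right_iff_imp]
    intro hr
    exact hr ▸ hs i
  · simp only [hi, false_imp_iff, and_true]

theorem entropicVector_normalRelation_eq_logb_card (U : Finset A) :
    entropicVector (normalRelation S B) U = Real.logb 2 #(projR U (normalRelation S B)) := by
  refine entropicVector_eq_logb_card_projR
    (k := ∏ i, if (univ ∩ S i).Nonempty then if (U ∩ S i).Nonempty then 1 else #(B i) else 1) ?_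
  simp only [projR, normalRelation, forall_mem_image]
  intro s hs
  have fiber_nonempty : ∀ i, (if (U ∩ S i).Nonempty then {s i} else B i).Nonempty := fun i => by
    split_ifs
    exacts [singleton_nonempty _, ⟨s i, mem_piFinset.1 hs i⟩]
  rw [← normalRelation, filter_proj_normalRelation hs, ← card_projR_univ,
    card_projR_normalRelation fiber_nonempty]
  simp only [apply_ite card, card_singleton]

theorem entropicVector_normalRelation (hB : ∀ i, (B i).Nonempty) (U : Finset A) :
    entropicVector (normalRelation S B) U = ∑ i, Real.logb 2 #(B i) * stepFn (S i) U := by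
  rw [entropicVector_normalRelation_eq_logb_card, card_projR_normalRelation hB, Nat.cast_prod,
    Real.logb_prod]
  · refine sum_congr rfl fun i _ => ?_
    simp only [stepFn, mul_ite, mul_one, mul_zero]
    split_ifs
    exacts [rfl, by rw [Nat.cast_one, Real.logb_one]]
  · intro i _
    split_ifs
    exacts [Nat.cast_ne_zero.2 (hB i).card_ne_zero, Nat.cast_ne_zero.2 one_ne_zero]

end NormalRelation

section StepFunctions

variable {A ι : Type*} [DecidableEq A]

theorem stepFn_nonneg (W U : Finset A) : 0 ≤ stepFn W U := by
  unfold stepFn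
  split_ifs
  exacts [zero_le_one, le_rfl]

theorem stepFn_le_one (W U : Finset A) : stepFn W U ≤ 1 := by
  unfold stepFn
  split_ifs
  exacts [le_rfl, zero_le_one]

theorem stepFn_mono (W : Finset A) : Monotone (stepFn W) := by
  intro U V hUV
  by_cases hU : (U ∩ W).Nonempty
  · exact (if_pos hU).trans_le (if_pos (hU.mono (inter_subset_inter_right hUV))).ge
  · exact (if_neg hU).trans_le (stepFn_nonneg W V)

theorem sum_mul_stepFn_sub_le [Fintype ι] {S : ι → Finset A} {a b : ι → ℝ} (hab : a ≤ b)
    {U V : Finset A} (hUV : U ⊆ V) :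
    ∑ i, a i * stepFn (S i) V - ∑ i, a i * stepFn (S i) U ≤
      ∑ i, b i * stepFn (S i) V - ∑ i, b i * stepFn (S i) U := by
  simp only [← sum_sub_distrib, ← mul_sub]
  exact sum_le_sum fun i _ =>
    mul_le_mul_of_nonneg_right (hab i) (sub_nonneg.2 (stepFn_mono (S i) hUV))

theorem sum_mul_stepFn_sub_card_le [Fintype ι] {S : ι → Finset A} {a b : ι → ℝ}
    (hab : ∀ i, a i - (if a i ≠ 0 then 1 else 0) ≤ b i) (U : Finset A) :
    ∑ i, a i * stepFn (S i) U - #{i | a i ≠ 0} ≤ ∑ i, b i * stepFn (S i) U := by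
  rw [card_filter, Nat.cast_sum, ← sum_sub_distrib]
  refine sum_le_sum fun i _ => ?_
  calc a i * stepFn (S i) U - ((if a i ≠ 0 then 1 else 0 : ℕ) : ℝ)
      ≤ a i * stepFn (S i) U - (if a i ≠ 0 then 1 else 0) * stepFn (S i) U := by
        rw [Nat.cast_ite, Nat.cast_one, Nat.cast_zero]
        refine sub_le_sub_left (mul_le_of_le_one_right ?_ (stepFn_le_one _ _)) _
        split_ifs
        exacts [zero_le_one, le_rfl]
    _ = (a i - (if a i ≠ 0 then 1 else 0)) * stepFn (S i) U := (sub_mul _ _ _).symm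
    _ ≤ b i * stepFn (S i) U := mul_le_mul_of_nonneg_right (hab i) (stepFn_nonneg _ _)

end StepFunctions

section Rounding

variable {a : ℝ}

theorem floor_two_rpow_pos (ha : 0 ≤ a) : 0 < ⌊(2 : ℝ) ^ a⌋₊ :=
  Nat.floor_pos.2 (Real.one_le_rpow one_le_two ha)

theorem range_floor_two_rpow_nonempty (ha : 0 ≤ a) : (range ⌊(2 : ℝ) ^ a⌋₊).Nonempty :=
  nonempty_range_iff.2 (floor_two_rpow_pos ha).ne'

theorem logb_floor_two_rpow_le (ha : 0 ≤ a) : Real.logb 2 ⌊(2 : ℝ) ^ a⌋₊ ≤ a :=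
  (Real.logb_le_iff_le_rpow one_lt_two (Nat.cast_pos.2 (floor_two_rpow_pos ha))).2
    (Nat.floor_le (Real.rpow_nonneg zero_le_two a))

theorem sub_ite_le_logb_floor_two_rpow (ha : 0 ≤ a) :
    a - (if a ≠ 0 then 1 else 0) ≤ Real.logb 2 ⌊(2 : ℝ) ^ a⌋₊ := by
  split_ifs with h
  · rw [Real.le_logb_iff_rpow_le one_lt_two (Nat.cast_pos.2 (floor_two_rpow_pos ha)),
      Real.rpow_sub_one two_ne_zero]
    exact (Nat.div_two_lt_floor (Real.one_le_rpow one_le_two ha)).le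
  · rw [not_not.1 h, sub_zero]
    exact Real.logb_nonneg one_lt_two (Nat.one_le_cast.2 (floor_two_rpow_pos le_rfl))

end Rounding

section RoundedRelation

variable {A ι : Type*} [Fintype A] [DecidableEq A] [Fintype ι] [DecidableEq ι]

/-- The normal relation approximating the normal polymatroid `∑ i, a i • stepFn (S i)`: rounding
`2 ^ a i` down to an integer makes it a possible number of values of the `i`-th parameter. -/
noncomputable def roundedRelation (S : ι → Finset A) (a : ι → ℝ) : Finset (A → ι → ℕ) :=
  normalRelation S fun i => range ⌊(2 : ℝ) ^ a i⌋₊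

variable {S : ι → Finset A} {a : ι → ℝ}

theorem entropicVector_roundedRelation (ha : 0 ≤ a) (U : Finset A) :
    entropicVector (roundedRelation S a) U =
      ∑ i, Real.logb 2 ⌊(2 : ℝ) ^ a i⌋₊ * stepFn (S i) U := by
  rw [roundedRelation, entropicVector_normalRelation fun i => range_floor_two_rpow_nonempty (ha i)]
  simp only [card_range]

theorem rpow_div_two_pow_le_card_roundedRelation (ha : 0 ≤ a) :
    (2 : ℝ) ^ (∑ i, a i * stepFn (S i) univ) / 2 ^ #{i | a i ≠ 0} ≤ #(roundedRelation S a) := by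
  have nonempty : (roundedRelation S a).Nonempty :=
    (piFinset_nonempty.2 fun i => range_floor_two_rpow_nonempty (ha i)).image _
  rw [← Real.rpow_natCast, ← Real.rpow_sub two_pos,
    ← Real.le_logb_iff_rpow_le one_lt_two (Nat.cast_pos.2 nonempty.card_pos), ← card_projR_univ,
    roundedRelation, ← entropicVector_normalRelation_eq_logb_card, ← roundedRelation,
    entropicVector_roundedRelation ha]
  exact sum_mul_stepFn_sub_card_le (fun i => sub_ite_le_logb_floor_two_rpow (ha i)) univ

theorem entropicVector_roundedRelation_sub_le (ha : 0 ≤ a) {U V : Finset A} (hUV : U ⊆ V) :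
    entropicVector (roundedRelation S a) V - entropicVector (roundedRelation S a) U ≤
      ∑ i, a i * stepFn (S i) V - ∑ i, a i * stepFn (S i) U := by
  rw [entropicVector_roundedRelation ha, entropicVector_roundedRelation ha]
  exact sum_mul_stepFn_sub_le (fun i => logb_floor_two_rpow_le (ha i)) hUV

end RoundedRelation

/-- Every normal polymatroid `h = ∑_W α_W · h^W` with `c` nonzero coefficients
is approximated by a totally uniform relation `T` : `|T| ≥ 2^{h(X)}/2^c`, and the entropic
vector `h_T` of the uniform distribution on `T` satisfies `h_T(V|U) ≤ h(V|U)` for all `U, V`. -/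
theorem normal_polymatroid_realizable {A : Type*} [Fintype A] [DecidableEq A]
    (α : Finset A → ℝ) (hα : ∀ W, 0 ≤ α W)
    (h : Finset A → ℝ) (hh : h = ∑ W : Finset A, α W • stepFn W)
    (c : ℕ) (hc : c = (Finset.univ.filter fun W : Finset A => α W ≠ 0).card) :
    ∃ (β : Type) (_ : DecidableEq β) (T : Finset (A → β)),
      -- the entropic vector of the uniform distribution on `T`
      (∀ W : Finset A,
          entropy (fun t => if t ∈ T then ((T.card : ℝ))⁻¹ else 0) T W
            = Real.logb 2 ((projR W T).card)) ∧      -- `T` is totally uniform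
      (2 : ℝ) ^ (h Finset.univ) / 2 ^ c ≤ (T.card : ℝ) ∧
      ∀ U V : Finset A,
        (entropy (fun t => if t ∈ T then ((T.card : ℝ))⁻¹ else 0) T (U ∪ V)
            - entropy (fun t => if t ∈ T then ((T.card : ℝ))⁻¹ else 0) T U)
          ≤ h (U ∪ V) - h U := by
  -- Indexing the subsets by `Fin n` keeps the values in `Type`, whatever the universe of `A`.
  let S := (Fintype.equivFin (Finset A)).symm
  have hαS : 0 ≤ α ∘ S := fun i => hα (S i)
  have h_eq (U : Finset A) : h U = ∑ i, (α ∘ S) i * stepFn (S i) U := by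
    rw [hh, Finset.sum_apply]
    exact (S.sum_comp fun W => α W * stepFn W U).symm
  have c_eq : c = #{i | (α ∘ S) i ≠ 0} := by
    rw [hc, card_filter, card_filter]
    exact (S.sum_comp fun W => if α W ≠ 0 then 1 else 0).symm
  refine ⟨Fin (Fintype.card (Finset A)) → ℕ, inferInstance, roundedRelation S (α ∘ S),
    entropicVector_normalRelation_eq_logb_card, ?_, fun U V => ?_⟩
  · rw [h_eq, c_eq]
    exact rpow_div_two_pow_le_card_roundedRelation hαS
  · rw [h_eq, h_eq]
    exact entropicVector_roundedRelation_sub_le hαS subset_union_left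

end JoinBounds
end

section
/- Let X = {X_1, …, X_n} be variables, let p ≥ 1 be a natural number, and let k, q_Y (for Y ⊆ X), and r_{ij} (for i ≠ j) be natural numbers. Consider the inequality ∑_{Y ⊆ X} q_Y·h(Y) + ∑_{i≠j} r_{ij}·(h({X_i}) + p·h(X_j|X_i)) ≥ k·h(X). Let G be the directed graph on vertex set X with an edge (X_i, X_j) whenever r_{ij} > 0. If G has no directed cycle of length ≤ p, then this inequality holds for all modular functions if and only if it holds for all polymatroids on X. -/
/-!
Given a polymatroid `h`, there is a nonnegative combination `g ≤ h` of step functions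
`U ↦ [U ∩ W ≠ ∅]` that agrees with `h` on the full set and on singletons. Replacing `h` by `g` can
only decrease the left-hand side of the inequality, because a conditional term `h(X_j|X_i)` is a
value of `h` on a pair minus its value on a singleton. So it suffices to check step functions.

The step functions of singletons are modular, so the inequality holds for them. For a larger set
`W` there are two cases. If some `v ∈ W` has no predecessor in `W`, the inequality for `{v}` implies
the one for `W`. Otherwise `W` contains a directed cycle, so `|W| ≥ p + 1`, and averaging the
inequalities for `{v}` over `v ∈ W` gives the one for `W`.
-/

open scoped BigOperators

namespace JoinBounds

/-- A polymatroid on the variable set `A`. -/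
def IsPolymatroid {A : Type*} [DecidableEq A] (h : Finset A → ℝ) : Prop :=
  h ∅ = 0 ∧ (∀ U V : Finset A, U ⊆ V → h U ≤ h V) ∧
    ∀ U V : Finset A, h U + h V ≥ h (U ∪ V) + h (U ∩ V)

/-- A modular function on the variable set `A`: nonnegative on singletons and additive. -/
def IsModular {A : Type*} [Fintype A] [DecidableEq A] (h : Finset A → ℝ) : Prop :=
  (∀ i : A, 0 ≤ h {i}) ∧ ∀ Y : Finset A, h Y = ∑ i ∈ Y, h {i}

open Finset
open scoped NNReal

section ClosedWalk

variable {α : Type*}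

lemma exists_periodic_walk_of_forall_exists_pred [Fintype α] [Nonempty α] {E : α → α → Prop}
    (hpred : ∀ v, ∃ u, E u v) :
    ∃ ℓ, 1 ≤ ℓ ∧ ℓ ≤ Fintype.card α ∧
      ∃ c : ℕ → α, Function.Periodic c ℓ ∧ ∀ t, E (c t) (c (t + 1)) := by
  choose pred hE using hpred
  obtain ⟨x₀⟩ := ‹Nonempty α›
  obtain ⟨i, j, hij, heq⟩ := Set.finite_univ.exists_lt_map_eq_of_forall_mem
    (f := fun i : ℕ => pred^[i] x₀) fun _ => Set.mem_univ _
  set x := pred^[i] x₀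
  set ℓ := Function.minimalPeriod pred x
  have hx : Function.IsPeriodicPt pred (j - i) x := by
    rw [Function.IsPeriodicPt, Function.IsFixedPt, ← Function.iterate_add_apply,
      Nat.sub_add_cancel hij.le]
    exact heq.symm
  have hℓ : 1 ≤ ℓ := hx.minimalPeriod_pos (Nat.sub_pos_of_lt hij)
  have hperiod : Function.IsPeriodicPt pred ℓ x := Function.isPeriodicPt_minimalPeriod pred x
  -- On the orbit of `x`, the iterate `pred^[ℓ - 1]` inverts `pred`, so it walks along the edges.
  refine ⟨ℓ, hℓ, Function.minimalPeriod_le_card, fun t => pred^[(ℓ - 1) * t] x,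
    fun t => ?_, fun t => ?_⟩
  · simp only [mul_add, Function.iterate_add_apply, (hperiod.const_mul (ℓ - 1)).eq]
  · have hstep : pred (pred^[(ℓ - 1) * (t + 1)] x) = pred^[(ℓ - 1) * t] x := by
      have hexp : (ℓ - 1) * (t + 1) + 1 = (ℓ - 1) * t + ℓ := by
        rw [mul_add, mul_one, add_assoc, Nat.sub_add_cancel hℓ]
      rw [← Function.iterate_succ_apply' pred, Nat.succ_eq_add_one, hexp,
        Function.iterate_add_apply, hperiod.eq]
    simpa only [hstep] using hE (pred^[(ℓ - 1) * (t + 1)] x)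

lemma lt_card_of_forall_exists_pred {E : α → α → Prop} {p : ℕ}
    (hgirth : ∀ ℓ, 1 ≤ ℓ → ℓ ≤ p → ∀ c : ℕ → α, Function.Periodic c ℓ →
      ¬ ∀ t, E (c t) (c (t + 1)))
    {W : Finset α} (hW : W.Nonempty) (hpred : ∀ v ∈ W, ∃ u ∈ W, E u v) : p < #W := by
  have : Nonempty W := hW.to_subtype
  obtain ⟨ℓ, hℓ, hℓW, c, hc, hE⟩ := exists_periodic_walk_of_forall_exists_pred
    (E := fun u v : W => E u v) fun v => by simpa using hpred v v.2
  by_contra! hp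
  exact hgirth ℓ hℓ (hℓW.trans (by simpa using hp)) (fun t => c t)
    (fun t => congrArg Subtype.val (hc t)) hE

end ClosedWalk

section Polymatroid

variable {V : Type*} [DecidableEq V] {h : Finset V → ℝ}

lemma IsPolymatroid.nonneg (hh : IsPolymatroid h) (U : Finset V) : 0 ≤ h U :=
  hh.1 ▸ hh.2.1 ∅ U (empty_subset U)

lemma IsModular.isPolymatroid [Fintype V] (hh : IsModular h) : IsPolymatroid h := by
  refine ⟨by rw [hh.2, sum_empty], fun U T hUT => ?_, fun U T => ?_⟩
  · rw [hh.2 U, hh.2 T]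
    exact sum_le_sum_of_subset_of_nonneg hUT fun i _ _ => hh.1 i
  · rw [hh.2 U, hh.2 T, hh.2 (U ∪ T), hh.2 (U ∩ T), sum_union_inter]

/-- The contraction `U ↦ h(U | x)` of `h` by the element `x`. -/
def contract (h : Finset V → ℝ) (x : V) (U : Finset V) : ℝ := h (insert x U) - h {x}

lemma isPolymatroid_contract (hh : IsPolymatroid h) (x : V) : IsPolymatroid (contract h x) := by
  refine ⟨by simp [contract], fun U T hUT => ?_, fun U T => ?_⟩
  · exact sub_le_sub_right (hh.2.1 _ _ (insert_subset_insert x hUT)) _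
  · have := hh.2.2 (insert x U) (insert x T)
    rw [← insert_union_distrib, ← insert_inter_distrib] at this
    simp only [contract]
    linarith

/-- The mutual information `I(U; x) = h(U) - h(U | x)`. -/
def mutualInfo (h : Finset V → ℝ) (x : V) (U : Finset V) : ℝ := h U - contract h x U

lemma IsPolymatroid.mutualInfo_mono (hh : IsPolymatroid h) (x : V) {U T : Finset V}
    (hUT : U ⊆ T) : mutualInfo h x U ≤ mutualInfo h x T := by
  have hunion : insert x U ∪ T = insert x T := by
    rw [insert_union, union_eq_right.2 hUT]
  have hinter : U ⊆ insert x U ∩ T := subset_inter (subset_insert x U) hUT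
  have := hh.2.2 (insert x U) T
  rw [hunion] at this
  have := hh.2.1 _ _ hinter
  simp only [mutualInfo, contract]
  linarith

lemma IsPolymatroid.mutualInfo_nonneg (hh : IsPolymatroid h) (x : V) (U : Finset V) :
    0 ≤ mutualInfo h x U := by
  simpa [mutualInfo, contract, hh.1] using hh.mutualInfo_mono x (empty_subset U)

end Polymatroid

section MaxFunction

variable {V : Type*}

/-- The function `U ↦ max_{i ∈ U} a i`. The values are taken in `ℝ≥0` so that the maximum over the
empty set is `0`. -/
def maxFunction (a : V → ℝ≥0) (U : Finset V) : ℝ := (U.sup a : ℝ≥0)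

lemma le_maxFunction (a : V → ℝ≥0) {U : Finset V} {i : V} (hi : i ∈ U) : a i ≤ maxFunction a U :=
  NNReal.coe_le_coe.2 (le_sup hi)

lemma maxFunction_singleton (a : V → ℝ≥0) (i : V) : maxFunction a {i} = a i := by
  simp [maxFunction]

end MaxFunction

section NormalFunction

variable {V : Type*} [DecidableEq V]

/-- The step function `U ↦ [U ∩ W ≠ ∅]` of the set `W`. -/
def stepFunction (W U : Finset V) : ℝ := if Disjoint U W then 0 else 1

lemma stepFunction_singleton_left (v : V) (U : Finset V) :
    stepFunction {v} U = if v ∈ U then 1 else 0 := by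
  simp [stepFunction]

lemma stepFunction_singleton_right (W : Finset V) (i : V) :
    stepFunction W {i} = if i ∈ W then 1 else 0 := by
  simp [stepFunction]

lemma stepFunction_pair_sub_singleton (W : Finset V) (i j : V) :
    stepFunction W {i, j} - stepFunction W {i} = if i ∉ W ∧ j ∈ W then 1 else 0 := by
  by_cases hi : i ∈ W <;> simp [stepFunction, hi]

lemma isModular_stepFunction_singleton [Fintype V] (v : V) : IsModular (stepFunction {v}) := by
  refine ⟨fun i => ?_, fun Y => ?_⟩
  · unfold stepFunction
    split_ifs <;> norm_num
  · simp [stepFunction_singleton_left]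

variable (V) in
/-- The cone of normal polymatroids: the nonnegative combinations of step functions. -/
def normalCone : PointedCone ℝ (Finset V → ℝ) := PointedCone.hull ℝ (Set.range stepFunction)

lemma stepFunction_mem_normalCone (W : Finset V) : stepFunction W ∈ normalCone V :=
  PointedCone.subset_hull ⟨W, rfl⟩

lemma map_nonneg_of_mem_normalCone {L : (Finset V → ℝ) →ₗ[ℝ] ℝ}
    (hL : ∀ W, 0 ≤ L (stepFunction W)) {g : Finset V → ℝ} (hg : g ∈ normalCone V) : 0 ≤ L g := by
  have hle : normalCone V ≤ (PointedCone.positive ℝ ℝ).comap L :=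
    Submodule.span_le.2 (Set.range_subset_iff.2 hL)
  exact hle hg

lemma monotone_of_mem_normalCone {g : Finset V → ℝ} (hg : g ∈ normalCone V) : Monotone g := by
  intro U T hUT
  rw [← sub_nonneg]
  refine map_nonneg_of_mem_normalCone (L := .proj T - .proj U) (fun W => ?_) hg
  have : Disjoint T W → Disjoint U W := Disjoint.mono_left hUT
  by_cases hT : Disjoint T W <;> by_cases hU : Disjoint U W <;> simp_all [stepFunction]

lemma map_empty_of_mem_normalCone {g : Finset V → ℝ} (hg : g ∈ normalCone V) : g ∅ = 0 := by
  have hneg := map_nonneg_of_mem_normalCone (L := -LinearMap.proj ∅)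
    (fun W => by simp [stepFunction]) hg
  have hpos := map_nonneg_of_mem_normalCone (L := LinearMap.proj ∅)
    (fun W => by simp [stepFunction]) hg
  exact le_antisymm (neg_nonneg.1 hneg) hpos

/-- Layer-cake step: the lowest level `m` of `a` contributes `m` times a step function. -/
lemma maxFunction_eq_smul_stepFunction_add [Fintype V] (a : V → ℝ≥0) {m : ℝ≥0}
    (hm : ∀ i, a i ≠ 0 → m ≤ a i) :
    maxFunction a = m • stepFunction {i | a i ≠ 0} + maxFunction (fun i => a i - m) := by
  ext U
  have hsub : U.sup (fun i => a i - m) = U.sup a - m :=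
    (apply_sup_eq_sup_comp_of_linearOrder (fun y : ℝ≥0 => y - m)
      (fun _ _ h => tsub_le_tsub_right h m) (by simp)).symm
  simp only [Pi.add_apply, Pi.smul_apply, maxFunction, hsub]
  by_cases hU : Disjoint U ({i | a i ≠ 0} : Finset V)
  · have hzero : U.sup a = 0 := by
      refine (Finset.sup_eq_bot_iff a U).2 fun i hi => ?_
      by_contra hai
      exact disjoint_left.1 hU hi (by simpa using hai)
    simp [stepFunction, hU, hzero]
  · obtain ⟨i, hiU, hi⟩ := not_disjoint_iff.1 hU
    have hle : m ≤ U.sup a := (hm i (by simpa using hi)).trans (le_sup hiU)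
    simp [stepFunction, hU, NNReal.smul_def, NNReal.coe_sub hle]

lemma maxFunction_mem_normalCone [Finite V] (a : V → ℝ≥0) : maxFunction a ∈ normalCone V := by
  cases nonempty_fintype V
  induction hn : #{i | a i ≠ 0} using Nat.strong_induction_on generalizing a with
  | _ n ih =>
  by_cases hne : ({i | a i ≠ 0} : Finset V).Nonempty
  · obtain ⟨x, hx, hmin⟩ := exists_min_image _ a hne
    simp only [mem_filter_univ] at hx hmin
    have hlt : #{i | a i - a x ≠ 0} < n := by
      rw [← hn]
      refine card_lt_card (ssubset_iff_of_subset (fun i hi => ?_) |>.2 ⟨x, by simpa, by simp⟩)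
      simp only [mem_filter_univ] at hi ⊢
      exact fun h0 => hi (by simp [h0])
    rw [maxFunction_eq_smul_stepFunction_add a hmin]
    exact add_mem (Submodule.smul_mem _ _ (stepFunction_mem_normalCone _)) (ih _ hlt _ rfl)
  · have ha : a = 0 := by
      ext i
      by_contra hi
      exact hne ⟨i, by simpa using hi⟩
    have hzero : maxFunction a = 0 := by
      ext U
      simp [ha, maxFunction]
    exact hzero ▸ zero_mem _

lemma IsPolymatroid.maxFunction_mutualInfo_le {h : Finset V → ℝ} (hh : IsPolymatroid h) (x : V)
    (U : Finset V) :
    maxFunction (fun i => ⟨mutualInfo h x {i}, hh.mutualInfo_nonneg x {i}⟩) U ≤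
      mutualInfo h x U :=
  NNReal.coe_le_coe (r₂ := ⟨mutualInfo h x U, hh.mutualInfo_nonneg x U⟩) |>.2 <|
    Finset.sup_le fun _ hi => hh.mutualInfo_mono x (singleton_subset_iff.2 hi)

/-- The recursion is `g(U) = max_{i ∈ U} I(i; x) + g'(U)`, where `g'` is the normal function
obtained for the contraction `h(· | x)`. -/
lemma IsPolymatroid.exists_mem_normalCone_le [Finite V] {h : Finset V → ℝ}
    (hh : IsPolymatroid h) (s : Finset V) :
    ∃ g ∈ normalCone V, g ≤ h ∧ g s = h s ∧ ∀ i ∈ s, g {i} = h {i} := by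
  induction s using Finset.induction_on generalizing h with
  | empty => exact ⟨0, zero_mem _, hh.nonneg, hh.1.symm, by simp⟩
  | insert x s _ ih =>
    obtain ⟨g, hg, hgh, hgs, hgi⟩ := ih (isPolymatroid_contract hh x)
    set a : V → ℝ≥0 := fun i => ⟨mutualInfo h x {i}, hh.mutualInfo_nonneg x {i}⟩
    have ha : ∀ i, (a i : ℝ) = mutualInfo h x {i} := fun _ => rfl
    have hax : (a x : ℝ) = h {x} := by simp [ha, mutualInfo, contract]
    have hmono := monotone_of_mem_normalCone hg
    have hle : ∀ U, maxFunction a U + g U ≤ h U := fun U =>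
      (add_le_add (hh.maxFunction_mutualInfo_le x U) (hgh U)).trans_eq (by simp [mutualInfo])
    refine ⟨_, add_mem (maxFunction_mem_normalCone a) hg, hle, (hle _).antisymm ?_,
      fun i hi => ?_⟩
    · calc h (insert x s) = a x + g s := by simp [hax, hgs, contract]
        _ ≤ maxFunction a (insert x s) + g (insert x s) :=
          add_le_add (le_maxFunction a (mem_insert_self x s)) (hmono (subset_insert x s))
    · rcases mem_insert.1 hi with rfl | his
      · have hnonneg : 0 ≤ g {i} := map_empty_of_mem_normalCone hg ▸ hmono (empty_subset {i})
        refine (hle _).antisymm ?_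
        simpa [maxFunction_singleton, hax] using hnonneg
      · simp [maxFunction_singleton, ha, hgi i his, mutualInfo]

end NormalFunction

section Weights

variable {V : Type*} [Fintype V] [DecidableEq V] {r : V → V → ℝ}

/-- The total weight of the edges leaving a vertex of `W`, loops excluded. Edges between two
vertices of `W` count. -/
def outWeight (r : V → V → ℝ) (W : Finset V) : ℝ := ∑ i ∈ W, ∑ j ∈ univ.erase i, r i j

/-- The total weight of the edges that enter `W` from outside. -/
def inWeight (r : V → V → ℝ) (W : Finset V) : ℝ := ∑ j ∈ W, ∑ i ∈ Wᶜ, r i j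

/-- The total weight of the sets that meet `W`. -/
def meetingWeight (q : Finset V → ℝ) (W : Finset V) : ℝ := ∑ Y, q Y * stepFunction W Y

lemma outWeight_mono (hr : ∀ i j, 0 ≤ r i j) : Monotone (outWeight r) := fun _ _ h =>
  sum_le_sum_of_subset_of_nonneg h fun i _ _ => sum_nonneg fun j _ => hr i j

lemma inWeight_nonneg (hr : ∀ i j, 0 ≤ r i j) (W : Finset V) : 0 ≤ inWeight r W :=
  sum_nonneg fun j _ => sum_nonneg fun i _ => hr i j

lemma meetingWeight_mono {q : Finset V → ℝ} (hq : ∀ Y, 0 ≤ q Y) : Monotone (meetingWeight q) := by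
  refine fun S T hST => sum_le_sum fun Y _ => mul_le_mul_of_nonneg_left ?_ (hq Y)
  have : Disjoint Y T → Disjoint Y S := Disjoint.mono_right hST
  by_cases hS : Disjoint Y S <;> by_cases hT : Disjoint Y T <;> simp_all [stepFunction]

lemma sum_outWeight_singleton (r : V → V → ℝ) (W : Finset V) :
    ∑ v ∈ W, outWeight r {v} = outWeight r W := by
  simp only [outWeight, sum_singleton]

lemma inWeight_singleton (r : V → V → ℝ) {W : Finset V} {v : V} (hv : v ∈ W) :
    inWeight r {v} = ∑ i ∈ W.erase v, r i v + ∑ i ∈ Wᶜ, r i v := by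
  have hdisj : Disjoint (W.erase v) Wᶜ := disjoint_compl_right.mono_left (erase_subset v W)
  have hunion : {v}ᶜ = W.erase v ∪ Wᶜ := by
    ext i
    by_cases hi : i ∈ W
    · simp [hi]
    · simpa [hi] using ne_of_mem_of_not_mem hv hi |>.symm
  rw [inWeight, sum_singleton, hunion, sum_union hdisj]

lemma sum_inWeight_singleton_le (hr : ∀ i j, 0 ≤ r i j) (W : Finset V) :
    ∑ v ∈ W, inWeight r {v} ≤ outWeight r W + inWeight r W := by
  have hinternal : ∑ v ∈ W, ∑ i ∈ W.erase v, r i v ≤ outWeight r W := by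
    rw [sum_comm' (t' := W) (s' := fun i => W.erase i)
      (fun v i => by simp only [mem_erase]; tauto)]
    exact sum_le_sum fun i _ => sum_le_sum_of_subset_of_nonneg
      (erase_subset_erase i (subset_univ W)) fun j _ _ => hr i j
  rw [sum_congr rfl fun v hv => inWeight_singleton r hv, sum_add_distrib]
  exact add_le_add_left hinternal _

lemma inWeight_singleton_le_of_no_pred (hr : ∀ i j, 0 ≤ r i j) {W : Finset V} {v : V} (hv : v ∈ W)
    (hpred : ∀ u ∈ W, u ≠ v → r u v ≤ 0) : inWeight r {v} ≤ inWeight r W := by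
  rw [inWeight_singleton r hv]
  calc ∑ i ∈ W.erase v, r i v + ∑ i ∈ Wᶜ, r i v ≤ ∑ i ∈ Wᶜ, r i v :=
        add_le_of_nonpos_left <| sum_nonpos fun u hu =>
          hpred u (mem_of_mem_erase hu) (ne_of_mem_erase hu)
    _ ≤ inWeight r W :=
        single_le_sum (f := fun v => ∑ i ∈ Wᶜ, r i v) (fun j _ => sum_nonneg fun i _ => hr i j) hv

lemma sum_mul_stepFunction_singleton_add (r : V → V → ℝ) (p : ℝ) (W : Finset V) :
    ∑ i, ∑ j ∈ univ.erase i,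
      r i j * (stepFunction W {i} + p * (stepFunction W {i, j} - stepFunction W {i})) =
      outWeight r W + p * inWeight r W := by
  have hout : ∑ i, ∑ j ∈ univ.erase i, r i j * stepFunction W {i} = outWeight r W := by
    simp only [stepFunction_singleton_right, ← sum_mul]
    simp only [mul_ite, mul_one, mul_zero, sum_ite_mem, univ_inter, outWeight]
  have hin : ∑ i, ∑ j ∈ univ.erase i, r i j * (stepFunction W {i, j} - stepFunction W {i}) =
      inWeight r W := by
    rw [inWeight, sum_comm, ← sum_subset (subset_univ Wᶜ)]
    · refine sum_congr rfl fun i hi => ?_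
      have hi : i ∉ W := mem_compl.1 hi
      have hinter : univ.erase i ∩ W = W := by
        rw [erase_inter, univ_inter, erase_eq_of_notMem hi]
      simp [stepFunction_pair_sub_singleton, hi, sum_ite_mem, hinter]
    · intro i _ hi
      have hi : i ∈ W := by simpa using hi
      simp [stepFunction_pair_sub_singleton, hi]
  rw [← hout, ← hin]
  simp only [mul_sum, ← sum_add_distrib]
  exact sum_congr rfl fun i _ => sum_congr rfl fun j _ => by ring

end Weights

section Gap

variable {V : Type*} [Fintype V] [DecidableEq V]
  {p k : ℝ} {q : Finset V → ℝ} {r : V → V → ℝ}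

/-- The difference of the two sides of the inequality
`∑ q_Y·h(Y) + ∑_{i≠j} r_{ij}·(h(X_i) + p·h(X_j|X_i)) ≥ k·h(X)`, as a linear functional of `h`. -/
def gap (p k : ℝ) (q : Finset V → ℝ) (r : V → V → ℝ) : (Finset V → ℝ) →ₗ[ℝ] ℝ :=
  ∑ Y, q Y • LinearMap.proj Y +
    ∑ i, ∑ j ∈ univ.erase i,
      r i j • (LinearMap.proj {i} + p • (LinearMap.proj {i, j} - LinearMap.proj {i})) -
    k • LinearMap.proj univ

lemma gap_apply (p k : ℝ) (q : Finset V → ℝ) (r : V → V → ℝ) (h : Finset V → ℝ) :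
    gap p k q r h = ∑ Y, q Y * h Y +
      ∑ i, ∑ j ∈ univ.erase i, r i j * (h {i} + p * (h {i, j} - h {i})) - k * h univ := by
  simp only [gap, LinearMap.sub_apply, LinearMap.add_apply, LinearMap.sum_apply,
    LinearMap.smul_apply, LinearMap.proj_apply, smul_eq_mul]

lemma gap_le_gap (hp : 0 ≤ p) (hq : ∀ Y, 0 ≤ q Y) (hr : ∀ i j, 0 ≤ r i j)
    {g h : Finset V → ℝ} (hgh : g ≤ h) (huniv : g univ = h univ) (hsingle : ∀ i, g {i} = h {i}) :
    gap p k q r g ≤ gap p k q r h := by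
  simp only [gap_apply, huniv, hsingle]
  gcongr with Y _ i _ j _
  · exact hq Y
  · exact hgh Y
  · exact hr i j
  · exact hgh {i, j}

lemma gap_stepFunction (p k : ℝ) (q : Finset V → ℝ) (r : V → V → ℝ) {W : Finset V}
    (hW : W.Nonempty) :
    gap p k q r (stepFunction W) =
      meetingWeight q W + (outWeight r W + p * inWeight r W) - k := by
  have huniv : stepFunction W univ = 1 := if_neg fun hdisj =>
    hW.ne_empty (top_disjoint.1 hdisj)
  rw [gap_apply, sum_mul_stepFunction_singleton_add, huniv, mul_one, meetingWeight]

lemma gap_stepFunction_nonneg_of_no_pred (hp : 0 ≤ p) (hq : ∀ Y, 0 ≤ q Y) (hr : ∀ i j, 0 ≤ r i j)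
    {W : Finset V} {v : V} (hv : v ∈ W) (hpred : ∀ u ∈ W, u ≠ v → r u v ≤ 0)
    (hgap : 0 ≤ gap p k q r (stepFunction {v})) : 0 ≤ gap p k q r (stepFunction W) := by
  have hvW : {v} ⊆ W := singleton_subset_iff.2 hv
  refine hgap.trans ?_
  rw [gap_stepFunction p k q r ⟨v, hv⟩, gap_stepFunction p k q r (singleton_nonempty v)]
  gcongr
  · exact meetingWeight_mono hq hvW
  · exact outWeight_mono hr hvW
  · exact inWeight_singleton_le_of_no_pred hr hv hpred

lemma gap_stepFunction_nonneg_of_card (hp : 0 ≤ p) (hq : ∀ Y, 0 ≤ q Y) (hr : ∀ i j, 0 ≤ r i j)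
    {W : Finset V} (hcard : p + 1 ≤ #W)
    (hgap : ∀ v ∈ W, 0 ≤ gap p k q r (stepFunction {v})) :
    0 ≤ gap p k q r (stepFunction W) := by
  have hW : W.Nonempty := card_pos.1 (by exact_mod_cast (by linarith : (0 : ℝ) < #W))
  have hout : 0 ≤ outWeight r W := by simpa [outWeight] using outWeight_mono hr (empty_subset W)
  have hin := inWeight_nonneg hr W
  rw [gap_stepFunction p k q r hW]
  set d := k - meetingWeight q W
  suffices d ≤ outWeight r W + p * inWeight r W by linarith
  have hdeg : ∀ v ∈ W, d ≤ outWeight r {v} + p * inWeight r {v} := fun v hv => by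
    have hv' := hgap v hv
    rw [gap_stepFunction p k q r (singleton_nonempty v)] at hv'
    have := meetingWeight_mono hq (singleton_subset_iff.2 hv)
    linarith
  have hsum : #W * d ≤ (p + 1) * outWeight r W + p * inWeight r W :=
    calc #W * d ≤ ∑ v ∈ W, (outWeight r {v} + p * inWeight r {v}) := by
          rw [← nsmul_eq_mul]
          exact card_nsmul_le_sum _ _ _ hdeg
      _ = outWeight r W + p * ∑ v ∈ W, inWeight r {v} := by
          rw [sum_add_distrib, sum_outWeight_singleton, mul_sum]
      _ ≤ outWeight r W + p * (outWeight r W + inWeight r W) := by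
          gcongr
          exact sum_inWeight_singleton_le hr W
      _ = (p + 1) * outWeight r W + p * inWeight r W := by ring
  rcases le_total d 0 with hd0 | hd0
  · exact hd0.trans (by positivity)
  · refine le_of_mul_le_mul_left ?_ (by linarith : 0 < p + 1)
    calc (p + 1) * d ≤ #W * d := by gcongr
      _ ≤ (p + 1) * outWeight r W + p * inWeight r W := hsum
      _ ≤ (p + 1) * (outWeight r W + p * inWeight r W) := by
          have : 0 ≤ p * p * inWeight r W := by positivity
          linarith

lemma gap_nonneg_of_stepFunction (hp : 0 ≤ p) (hq : ∀ Y, 0 ≤ q Y) (hr : ∀ i j, 0 ≤ r i j)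
    (hstep : ∀ W, W.Nonempty → 0 ≤ gap p k q r (stepFunction W)) {h : Finset V → ℝ}
    (hh : IsPolymatroid h) : 0 ≤ gap p k q r h := by
  obtain ⟨g, hg, hgh, huniv, hsingle⟩ := hh.exists_mem_normalCone_le univ
  refine (map_nonneg_of_mem_normalCone (fun W => ?_) hg).trans
    (gap_le_gap hp hq hr hgh huniv fun i => hsingle i (mem_univ i))
  rcases W.eq_empty_or_nonempty with rfl | hW
  · have hzero : stepFunction (∅ : Finset V) = 0 := by
      ext U
      simp [stepFunction]
    simp [hzero]
  · exact hstep W hW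

end Gap

theorem modular_iff_polymatroid_of_girth_general {V : Type*} [Fintype V] [DecidableEq V]
    (p : ℕ) (k : ℝ) (q : Finset V → ℝ) (r : V → V → ℝ)
    (hq : ∀ Y, 0 ≤ q Y) (hr : ∀ i j, 0 ≤ r i j)
    (hgirth : ∀ ℓ : ℕ, 1 ≤ ℓ → ℓ ≤ p → ∀ c : ℕ → V, (∀ t, c (t + ℓ) = c t) →
      ¬ ∀ t, c t ≠ c (t + 1) ∧ 0 < r (c t) (c (t + 1))) :
    (∀ h : Finset V → ℝ, IsModular h →
        (∑ Y, q Y * h Y) +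
          (∑ i, ∑ j ∈ univ.erase i, r i j * (h {i} + (p : ℝ) * (h {i, j} - h {i})))
          ≥ k * h univ)
      ↔
      (∀ h : Finset V → ℝ, IsPolymatroid h →
        (∑ Y, q Y * h Y) +
          (∑ i, ∑ j ∈ univ.erase i, r i j * (h {i} + (p : ℝ) * (h {i, j} - h {i})))
          ≥ k * h univ) := by
  simp only [ge_iff_le, ← sub_nonneg (b := k * _), ← gap_apply]
  refine ⟨fun hmod h hh => ?_, fun hpoly h hh => hpoly h hh.isPolymatroid⟩
  have hsingle (v : V) := hmod _ (isModular_stepFunction_singleton v)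
  refine gap_nonneg_of_stepFunction p.cast_nonneg hq hr (fun W hW => ?_) hh
  by_cases hpred : ∀ v ∈ W, ∃ u ∈ W, u ≠ v ∧ 0 < r u v
  · have hcard : p < #W := lt_card_of_forall_exists_pred hgirth hW hpred
    exact gap_stepFunction_nonneg_of_card p.cast_nonneg hq hr (by exact_mod_cast hcard)
      fun v _ => hsingle v
  · push Not at hpred
    obtain ⟨v, hv, hpred⟩ := hpred
    exact gap_stepFunction_nonneg_of_no_pred p.cast_nonneg hq hr hv hpred (hsingle v)

/-- Consider the inequality
`∑_Y q_Y·h(Y) + ∑_{i≠j} r_{ij}·(h(X_i) + p·h(X_j|X_i)) ≥ k·h(X)` with natural-number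
coefficients.  If the directed graph with an edge `(i, j)` whenever `r i j > 0` (for `i ≠ j`)
has no directed cycle of length `≤ p` (formalized as: no closed walk of period `ℓ ≤ p` all of
whose steps are edges), then the inequality holds for all modular functions iff it holds for
all polymatroids. -/
theorem modular_iff_polymatroid_of_girth (n : ℕ) (p : ℕ) (hp : 1 ≤ p) (k : ℕ)
    (q : Finset (Fin n) → ℕ) (r : Fin n → Fin n → ℕ)
    (hgirth : ∀ ℓ : ℕ, 1 ≤ ℓ → ℓ ≤ p → ∀ c : ℕ → Fin n, (∀ t, c (t + ℓ) = c t) →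
      ¬ ∀ t, c t ≠ c (t + 1) ∧ 0 < r (c t) (c (t + 1))) :
    ((∀ h : Finset (Fin n) → ℝ, IsModular h →
        (∑ Y : Finset (Fin n), (q Y : ℝ) * h Y) +
          (∑ i : Fin n, ∑ j ∈ Finset.univ.erase i,
            (r i j : ℝ) * (h {i} + (p : ℝ) * (h {i, j} - h {i})))
          ≥ (k : ℝ) * h Finset.univ)
      ↔
      (∀ h : Finset (Fin n) → ℝ, IsPolymatroid h →
        (∑ Y : Finset (Fin n), (q Y : ℝ) * h Y) +
          (∑ i : Fin n, ∑ j ∈ Finset.univ.erase i,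
            (r i j : ℝ) * (h {i} + (p : ℝ) * (h {i, j} - h {i})))
          ≥ (k : ℝ) * h Finset.univ)) := by
  simpa only [Nat.cast_pos] using
    modular_iff_polymatroid_of_girth_general p k (fun Y => q Y) (fun i j => r i j)
      (fun Y => (q Y).cast_nonneg) (fun i j => (r i j).cast_nonneg) (by simpa using hgirth)

end JoinBounds
end

section
/- Let h be a polymatroid on X = {X_1, …, X_n}, and define h' by h'({X_i}) := h(X_i | X_1 X_2 ⋯ X_{i−1}) for each i, and h'(Y) := ∑_{X_i ∈ Y} h'({X_i}) for every Y ⊆ X. Then h' is a modular function and satisfies: h'(X) = h(X); h'(Y) ≤ h(Y) for every Y ⊆ X; and h'(X_j|X_i) ≤ h(X_j|X_i) for all i < j. -/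
open scoped BigOperators

namespace JoinBounds

/-! Expanding `h` along the order of the variables makes `h'` telescope to `h` on initial
segments. On other sets `h'` charges each variable its increment over *all* of its predecessors,
and by submodularity this is at most its increment over those predecessors that are present. -/

/-- The submodularity axiom of polymatroids, for set functions with values in any ordered group. -/
def IsSubmodular {A G : Type*} [DecidableEq A] [Add G] [LE G] (h : Finset A → G) : Prop :=
  ∀ U V : Finset A, h (U ∪ V) + h (U ∩ V) ≤ h U + h V

theorem IsSubmodular.insert_sub_le_insert_sub {A G : Type*} [DecidableEq A] [AddCommGroup G]
    [PartialOrder G] [IsOrderedAddMonoid G] {h : Finset A → G} (hsub : IsSubmodular h)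
    {S T : Finset A} (hST : S ⊆ T) {a : A} (ha : a ∉ T) :
    h (insert a T) - h T ≤ h (insert a S) - h S := by
  have hunion : insert a S ∪ T = insert a T := by
    rw [Finset.insert_union, Finset.union_eq_right.mpr hST]
  have hinter : insert a S ∩ T = S := by
    rw [Finset.insert_inter_of_notMem ha, Finset.inter_eq_left.mpr hST]
  have hsubmod := hsub (insert a S) T
  rw [hunion, hinter] at hsubmod
  rwa [sub_le_sub_iff]

section Modularization

variable {A G : Type*} [LinearOrder A] [LocallyFiniteOrderBot A] [AddCommGroup G]

/-- The modular function `h'` of the modularization lemma: each variable `i` has weight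
`h(i | predecessors of i)`, where the conditional term is written out as a difference. -/
def modularPart (h : Finset A → G) (Y : Finset A) : G :=
  ∑ i ∈ Y, (h (Finset.Iic i) - h (Finset.Iio i))

theorem modularPart_singleton (h : Finset A → G) (i : A) :
    modularPart h {i} = h (Finset.Iic i) - h (Finset.Iio i) :=
  Finset.sum_singleton _ _

theorem modularPart_eq_sum_singleton (h : Finset A → G) (Y : Finset A) :
    modularPart h Y = ∑ i ∈ Y, modularPart h {i} := by
  simp only [modularPart, Finset.sum_singleton]

theorem modularPart_insert (h : Finset A → G) {S : Finset A} {a : A} (ha : a ∉ S) :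
    modularPart h (insert a S) = h (Finset.Iic a) - h (Finset.Iio a) + modularPart h S :=
  Finset.sum_insert ha

theorem modularPart_eq_sub_of_isLowerSet (h : Finset A → G) {Y : Finset A}
    (hY : IsLowerSet (Y : Set A)) : modularPart h Y = h Y - h ∅ := by
  induction Y using Finset.induction_on_max with
  | empty => simp [modularPart]
  | insert a S hlt ih =>
    have hS : S = Finset.Iio a := by
      ext x
      refine ⟨fun hx ↦ Finset.mem_Iio.mpr (hlt x hx), fun hx ↦ ?_⟩
      have hxa : x < a := Finset.mem_Iio.mp hx
      exact Finset.mem_of_mem_insert_of_ne (hY hxa.le (Finset.mem_insert_self a S)) hxa.ne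
    have hlower : IsLowerSet (S : Set A) := by
      rw [hS, Finset.coe_Iio]
      exact isLowerSet_Iio a
    rw [modularPart_insert h fun ha ↦ (hlt a ha).false, ih hlower, hS, Finset.Iio_insert,
      sub_add_sub_cancel]

variable [PartialOrder G] [IsOrderedAddMonoid G] {h : Finset A → G}

theorem modularPart_singleton_nonneg (hmono : Monotone h) (i : A) : 0 ≤ modularPart h {i} := by
  rw [modularPart_singleton, sub_nonneg]
  exact hmono Finset.Iio_subset_Iic_self

theorem IsSubmodular.modularPart_insert_sub_le (hsub : IsSubmodular h) {S : Finset A} {a : A}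
    (hlt : ∀ x ∈ S, x < a) :
    modularPart h (insert a S) - modularPart h S ≤ h (insert a S) - h S := by
  have hS : S ⊆ Finset.Iio a := fun x hx ↦ Finset.mem_Iio.mpr (hlt x hx)
  rw [modularPart_insert h fun ha ↦ (hlt a ha).false, add_sub_cancel_right, ← Finset.Iio_insert]
  exact hsub.insert_sub_le_insert_sub hS Finset.notMem_Iio_self

theorem IsSubmodular.modularPart_union_sub_le (hsub : IsSubmodular h) {Y Z : Finset A}
    (hlt : ∀ y ∈ Y, ∀ z ∈ Z, y < z) :
    modularPart h (Y ∪ Z) - modularPart h Y ≤ h (Y ∪ Z) - h Y := by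
  induction Z using Finset.induction_on_max with
  | empty => simp
  | insert a S hmax ih =>
    have hinitial : modularPart h (Y ∪ S) - modularPart h Y ≤ h (Y ∪ S) - h Y :=
      ih fun y hy z hz ↦ hlt y hy z (Finset.mem_insert_of_mem hz)
    have hbelow : ∀ x ∈ Y ∪ S, x < a := fun x hx ↦
      (Finset.mem_union.mp hx).elim (hlt x · a (Finset.mem_insert_self a S)) (hmax x)
    rw [Finset.union_insert]
    simpa only [sub_add_sub_cancel] using
      add_le_add (hsub.modularPart_insert_sub_le hbelow) hinitial

theorem IsSubmodular.modularPart_le_sub (hsub : IsSubmodular h) (Y : Finset A) :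
    modularPart h Y ≤ h Y - h ∅ := by
  simpa [modularPart] using hsub.modularPart_union_sub_le (Y := ∅) (Z := Y) (by simp)

theorem modularization_general (hempty : h ∅ = 0) (hmono : Monotone h) (hsub : IsSubmodular h) :
    (∀ i : A, 0 ≤ modularPart h {i}) ∧
    (∀ Y : Finset A, modularPart h Y = ∑ i ∈ Y, modularPart h {i}) ∧
    (∀ Y : Finset A, IsLowerSet (Y : Set A) → modularPart h Y = h Y) ∧
    (∀ Y : Finset A, modularPart h Y ≤ h Y) ∧
    (∀ Y Z : Finset A, (∀ y ∈ Y, ∀ z ∈ Z, y < z) →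
      modularPart h (Y ∪ Z) - modularPart h Y ≤ h (Y ∪ Z) - h Y) := by
  refine ⟨modularPart_singleton_nonneg hmono, modularPart_eq_sum_singleton h, fun Y hY ↦ ?_,
    fun Y ↦ ?_, fun Y Z ↦ hsub.modularPart_union_sub_le⟩
  · simpa only [hempty, sub_zero] using modularPart_eq_sub_of_isLowerSet h hY
  · simpa only [hempty, sub_zero] using hsub.modularPart_le_sub Y

end Modularization

/-- **modularization lemma.** Given a polymatroid `h` on `{X_1, …, X_n}` and the
modularization `h'` defined by `h'({X_i}) = h(X_i | X_1 ⋯ X_{i-1})` and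
`h'(Y) = ∑_{X_i ∈ Y} h'({X_i})`, the function `h'` is modular and satisfies
`h'(X) = h(X)`, `h'(Y) ≤ h(Y)` for all `Y`, and `h'(X_j|X_i) ≤ h(X_j|X_i)` for `i < j`. -/
theorem modularization (n : ℕ) (h : Finset (Fin n) → ℝ) (hpoly : IsPolymatroid h)
    (h' : Finset (Fin n) → ℝ)
    (hdef : ∀ Y : Finset (Fin n), h' Y = ∑ i ∈ Y, (h (Finset.Iic i) - h (Finset.Iio i))) :
    (∀ i : Fin n, 0 ≤ h' {i}) ∧
    (∀ Y : Finset (Fin n), h' Y = ∑ i ∈ Y, h' {i}) ∧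
    h' Finset.univ = h Finset.univ ∧
    (∀ Y : Finset (Fin n), h' Y ≤ h Y) ∧
    (∀ i j : Fin n, i < j → h' {i, j} - h' {i} ≤ h {i, j} - h {i}) := by
  obtain rfl : h' = modularPart h := funext hdef
  obtain ⟨hnonneg, hmodular, hlower, hle, hcond⟩ :=
    modularization_general hpoly.1 (fun U V ↦ hpoly.2.1 U V) hpoly.2.2
  exact ⟨hnonneg, hmodular, hlower _ (by simp [isLowerSet_univ]), hle,
    fun i j hij ↦ hcond {i} {j} (by simpa using hij)⟩

end JoinBounds
end

section
/- Let R and S be finite binary relations and let Q = {(x, y, z) : (x, y) ∈ R and (y, z) ∈ S} be their join. Let p > 0 and q > 1 be reals with 1/p + 1/q ≤ 1. Then |Q| ≤ ||deg_R(X|Y)||_p · ||deg_S(Z|Y)||_q^{q/(p(q−1))} · |S|^{1 − q/(p(q−1))}. -/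
open scoped BigOperators

namespace JoinBounds

noncomputable section

variable {α β γ : Type*}

/-- Degree of the value `y` in the second coordinate of the binary relation `R`. -/
def degSnd [DecidableEq α] [DecidableEq β] (R : Finset (α × β)) (y : β) : ℕ :=
  (R.filter fun t => t.2 = y).card

/-- Degree of the value `y` in the first coordinate of the binary relation `S`. -/
def degFst [DecidableEq β] [DecidableEq γ] (S : Finset (β × γ)) (y : β) : ℕ :=
  (S.filter fun t => t.1 = y).card

/-- The `ℓ_p`-norm (`0 < p < ∞`) of the degree sequence `deg_R(X|Y)`, conditioned on the
second coordinate. -/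
def lpSnd [DecidableEq α] [DecidableEq β] (R : Finset (α × β)) (p : ℝ) : ℝ :=
  (∑ y ∈ R.image Prod.snd, (degSnd R y : ℝ) ^ p) ^ (1 / p)

/-- The `ℓ_p`-norm (`0 < p < ∞`) of the degree sequence `deg_S(Z|Y)`, conditioned on the
first coordinate. -/
def lpFst [DecidableEq β] [DecidableEq γ] (S : Finset (β × γ)) (p : ℝ) : ℝ :=
  (∑ y ∈ S.image Prod.fst, (degFst S y : ℝ) ^ p) ^ (1 / p)

/-- The join `Q = {(x, y, z) : (x, y) ∈ R ∧ (y, z) ∈ S}`. -/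
def join [DecidableEq α] [DecidableEq β] [DecidableEq γ]
    (R : Finset (α × β)) (S : Finset (β × γ)) : Finset (α × β × γ) :=
  ((R ×ˢ S).filter fun t => t.1.2 = t.2.1).image fun t => (t.1.1, t.1.2, t.2.2)

end

/-!
The join splits over the shared value `y` as `|Q| = ∑ y, a y * b y`, with `a` and `b` the degree
sequences of `R` and `S`. Hölder's inequality bounds this sum by `‖a‖_p ‖b‖_r`, with `r` conjugate
to `p`. The condition `1/p + 1/q ≤ 1` says exactly that `r ≤ q`, so `‖b‖_r` is bounded by the
interpolation `‖b‖_1 ^ (1 - θ) * ‖b‖_q ^ θ`, where `‖b‖_1 = |S|` and `1/r = (1 - θ) + θ/q`, that is,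
`θ = q / (p * (q - 1))`.
-/

section Interpolation

variable {ι : Type*} {s : Finset ι} {f g : ι → ℝ}

theorem Lr_le_Lp_mul_Lq_of_nonneg (hf : ∀ i ∈ s, 0 ≤ f i) (hg : ∀ i ∈ s, 0 ≤ g i) {p q r : ℝ}
    (hpqr : p.HolderTriple q r) :
    (∑ i ∈ s, (f i * g i) ^ r) ^ (1 / r)
      ≤ (∑ i ∈ s, f i ^ p) ^ (1 / p) * (∑ i ∈ s, g i ^ q) ^ (1 / q) := by
  have hr : 0 < r := hpqr.pos'
  have hF : 0 ≤ ∑ i ∈ s, f i ^ p := Finset.sum_nonneg fun i hi ↦ Real.rpow_nonneg (hf i hi) p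
  have hG : 0 ≤ ∑ i ∈ s, g i ^ q := Finset.sum_nonneg fun i hi ↦ Real.rpow_nonneg (hg i hi) q
  have hFG : 0 ≤ ∑ i ∈ s, (f i * g i) ^ r :=
    Finset.sum_nonneg fun i hi ↦ Real.rpow_nonneg (mul_nonneg (hf i hi) (hg i hi)) r
  have cancel (c : ℝ) : r / c * (1 / r) = 1 / c := by field_simp
  calc (∑ i ∈ s, (f i * g i) ^ r) ^ (1 / r)
    _ ≤ ((∑ i ∈ s, f i ^ p) ^ (r / p) * (∑ i ∈ s, g i ^ q) ^ (r / q)) ^ (1 / r) :=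
      Real.rpow_le_rpow hFG (Real.Lr_rpow_le_Lp_mul_Lq_of_nonneg s hpqr hf hg) (by positivity)
    _ = (∑ i ∈ s, f i ^ p) ^ (1 / p) * (∑ i ∈ s, g i ^ q) ^ (1 / q) := by
      rw [Real.mul_rpow (by positivity) (by positivity), ← Real.rpow_mul hF, ← Real.rpow_mul hG,
        cancel, cancel]

theorem Lr_le_Lp_rpow_mul_Lq_rpow (hf : ∀ i ∈ s, 0 ≤ f i) {p q r θ : ℝ} (hp : 0 < p) (hq : 0 < q)
    (hθ₀ : 0 ≤ θ) (hθ₁ : θ ≤ 1) (hr : 1 / r = (1 - θ) / p + θ / q) :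
    (∑ i ∈ s, f i ^ r) ^ (1 / r)
      ≤ ((∑ i ∈ s, f i ^ p) ^ (1 / p)) ^ (1 - θ) * ((∑ i ∈ s, f i ^ q) ^ (1 / q)) ^ θ := by
  rcases hθ₀.eq_or_lt with rfl | hθ₀
  · obtain rfl : r = p := by simpa using hr
    simp
  rcases hθ₁.eq_or_lt with rfl | hθ₁
  · obtain rfl : r = q := by simpa using hr
    simp
  have hθ₁' : 0 < 1 - θ := sub_pos.2 hθ₁
  have triple : (p / (1 - θ)).HolderTriple (q / θ) r :=
    ⟨by rw [inv_div, inv_div, ← hr, one_div], by positivity, by positivity⟩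
  have factor : ∀ i ∈ s, f i ^ r = (f i ^ (1 - θ) * f i ^ θ) ^ r := fun i hi ↦ by
    rw [← Real.rpow_add_of_nonneg (hf i hi) hθ₁'.le hθ₀.le, sub_add_cancel, Real.rpow_one]
  have norm_rpow {c u : ℝ} (hu : 0 < u) :
      (∑ i ∈ s, (f i ^ u) ^ (c / u)) ^ (1 / (c / u)) = ((∑ i ∈ s, f i ^ c) ^ (1 / c)) ^ u := by
    have unscale : ∀ i ∈ s, (f i ^ u) ^ (c / u) = f i ^ c := fun i hi ↦ by
      rw [← Real.rpow_mul (hf i hi), mul_div_cancel₀ _ hu.ne']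
    rw [Finset.sum_congr rfl unscale, one_div_div, div_eq_mul_one_div, mul_comm, Real.rpow_mul]
    exact Finset.sum_nonneg fun i hi ↦ Real.rpow_nonneg (hf i hi) c
  rw [Finset.sum_congr rfl factor, ← norm_rpow hθ₁', ← norm_rpow hθ₀]
  exact Lr_le_Lp_mul_Lq_of_nonneg (fun i hi ↦ Real.rpow_nonneg (hf i hi) _)
    (fun i hi ↦ Real.rpow_nonneg (hf i hi) _) triple

theorem inner_le_Lp_mul_Lq_rpow_mul_sum_rpow (hf : ∀ i ∈ s, 0 ≤ f i) (hg : ∀ i ∈ s, 0 ≤ g i)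
    {p q : ℝ} (hp : 0 < p) (hq : 1 < q) (hpq : 1 / p + 1 / q ≤ 1) :
    ∑ i ∈ s, f i * g i
      ≤ (∑ i ∈ s, f i ^ p) ^ (1 / p) * ((∑ i ∈ s, g i ^ q) ^ (1 / q)) ^ (q / (p * (q - 1)))
          * (∑ i ∈ s, g i) ^ (1 - q / (p * (q - 1))) := by
  have hq₀ : 0 < q := by linarith
  have hq₁ : 0 < q - 1 := sub_pos.2 hq
  have hp₁ : 1 < p := by
    have : 0 < 1 / q := by positivity
    rw [← div_lt_one hp]
    linarith
  set r := p.conjExponent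
  have hconj : p.HolderConjugate r := .conjExponent hp₁
  set θ := q / (p * (q - 1)) with hθ
  have hθ₁ : θ ≤ 1 := by
    rw [hθ, div_le_one (by positivity)]
    field_simp at hpq
    linarith
  have hr : 1 / r = (1 - θ) / 1 + θ / q := by
    rw [one_div, ← hconj.one_sub_inv, hθ]
    field_simp
    ring
  have interpolate := Lr_le_Lp_rpow_mul_Lq_rpow hg one_pos hq₀ (by positivity) hθ₁ hr
  simp only [Real.rpow_one, div_one] at interpolate
  calc ∑ i ∈ s, f i * g i
    _ ≤ (∑ i ∈ s, f i ^ p) ^ (1 / p) * (∑ i ∈ s, g i ^ r) ^ (1 / r) :=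
      Real.inner_le_Lp_mul_Lq_of_nonneg s hconj hf hg
    _ ≤ (∑ i ∈ s, f i ^ p) ^ (1 / p)
          * ((∑ i ∈ s, g i) ^ (1 - θ) * ((∑ i ∈ s, g i ^ q) ^ (1 / q)) ^ θ) :=
      mul_le_mul_of_nonneg_left interpolate <|
        Real.rpow_nonneg (Finset.sum_nonneg fun i hi ↦ Real.rpow_nonneg (hf i hi) p) _
    _ = _ := by ring

end Interpolation

section Join

variable {α β γ : Type*} [DecidableEq α] [DecidableEq β] [DecidableEq γ]

theorem mem_join {R : Finset (α × β)} {S : Finset (β × γ)} {x : α} {y : β} {z : γ} :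
    (x, y, z) ∈ join R S ↔ (x, y) ∈ R ∧ (y, z) ∈ S := by
  simp only [join, Finset.mem_image, Finset.mem_filter, Finset.mem_product, Prod.mk.injEq]
  constructor
  · rintro ⟨⟨⟨x, y⟩, y', z⟩, ⟨⟨hR, hS⟩, (rfl : y = y')⟩, rfl, rfl, rfl⟩
    exact ⟨hR, hS⟩
  · rintro ⟨hR, hS⟩
    exact ⟨((x, y), (y, z)), ⟨⟨hR, hS⟩, rfl⟩, rfl, rfl, rfl⟩

theorem card_filter_join (R : Finset (α × β)) (S : Finset (β × γ)) (y : β) :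
    ((join R S).filter fun t ↦ t.2.1 = y).card = degSnd R y * degFst S y := by
  rw [degSnd, degFst, ← Finset.card_product]
  refine Finset.card_nbij' (fun t ↦ ((t.1, t.2.1), t.2)) (fun u ↦ (u.1.1, u.2)) ?_ ?_ ?_ ?_
  · rintro ⟨x, y, z⟩ h
    simp only [Finset.mem_coe, Finset.mem_filter, Finset.mem_product, mem_join] at h ⊢
    exact ⟨⟨h.1.1, h.2⟩, h.1.2, h.2⟩
  · rintro ⟨⟨x, y₁⟩, y₂, z⟩ h
    simp only [Finset.mem_coe, Finset.mem_filter, Finset.mem_product, mem_join] at h ⊢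
    obtain ⟨⟨hR, rfl⟩, hS, rfl⟩ := h
    exact ⟨⟨hR, hS⟩, rfl⟩
  · exact fun _ _ ↦ rfl
  · rintro ⟨⟨x, y₁⟩, y₂, z⟩ h
    simp only [Finset.mem_coe, Finset.mem_filter, Finset.mem_product] at h
    obtain ⟨⟨-, rfl⟩, -, rfl⟩ := h
    rfl

theorem card_join (R : Finset (α × β)) (S : Finset (β × γ)) :
    (join R S).card = ∑ y ∈ S.image Prod.fst, degSnd R y * degFst S y := by
  have fst_mem : ∀ t ∈ join R S, t.2.1 ∈ S.image Prod.fst := fun t ht ↦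
    Finset.mem_image_of_mem _ (mem_join.1 ht).2
  simp only [Finset.card_eq_sum_card_fiberwise fst_mem, card_filter_join]

theorem sum_degFst (S : Finset (β × γ)) : ∑ y ∈ S.image Prod.fst, degFst S y = S.card :=
  (Finset.card_eq_sum_card_image Prod.fst S).symm

theorem degSnd_eq_zero {R : Finset (α × β)} {y : β} (hy : y ∉ R.image Prod.snd) :
    degSnd R y = 0 :=
  Finset.card_filter_eq_zero_iff.2 fun _ ht hty ↦ hy (Finset.mem_image.2 ⟨_, ht, hty⟩)

theorem rpow_sum_degSnd_rpow_le_lpSnd (R : Finset (α × β)) (T : Finset β) {p : ℝ} (hp : 0 < p) :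
    (∑ y ∈ T, (degSnd R y : ℝ) ^ p) ^ (1 / p) ≤ lpSnd R p := by
  refine Real.rpow_le_rpow (by positivity) ?_ (by positivity)
  calc ∑ y ∈ T, (degSnd R y : ℝ) ^ p
    _ ≤ ∑ y ∈ T ∪ R.image Prod.snd, (degSnd R y : ℝ) ^ p :=
      Finset.sum_le_sum_of_subset_of_nonneg Finset.subset_union_left fun _ _ _ ↦ by positivity
    _ = ∑ y ∈ R.image Prod.snd, (degSnd R y : ℝ) ^ p :=
      (Finset.sum_subset Finset.subset_union_right fun y _ hy ↦ by
        rw [degSnd_eq_zero hy, Nat.cast_zero, Real.zero_rpow hp.ne']).symm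

end Join

/-- **single join bound.** For reals `p > 0` and `q > 1` with `1/p + 1/q ≤ 1`:
`|Q| ≤ ‖deg_R(X|Y)‖_p · ‖deg_S(Z|Y)‖_q^{q/(p(q−1))} · |S|^{1 − q/(p(q−1))}`. -/
theorem single_join_bound' {α β γ : Type*} [DecidableEq α] [DecidableEq β] [DecidableEq γ]
    (R : Finset (α × β)) (S : Finset (β × γ))
    (p q : ℝ) (hp : 0 < p) (hq : 1 < q) (hpq : 1 / p + 1 / q ≤ 1) :
    ((join R S).card : ℝ)
      ≤ lpSnd R p * (lpFst S q) ^ (q / (p * (q - 1)))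
          * ((S.card : ℝ)) ^ (1 - q / (p * (q - 1))) := by
  have hS : (S.card : ℝ) = ∑ y ∈ S.image Prod.fst, (degFst S y : ℝ) := by
    exact_mod_cast (sum_degFst S).symm
  calc ((join R S).card : ℝ)
    _ = ∑ y ∈ S.image Prod.fst, (degSnd R y : ℝ) * degFst S y := by exact_mod_cast card_join R S
    _ ≤ (∑ y ∈ S.image Prod.fst, (degSnd R y : ℝ) ^ p) ^ (1 / p)
          * lpFst S q ^ (q / (p * (q - 1))) * (S.card : ℝ) ^ (1 - q / (p * (q - 1))) := by
      rw [hS, lpFst]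
      exact inner_le_Lp_mul_Lq_rpow_mul_sum_rpow (fun _ _ ↦ Nat.cast_nonneg _)
        (fun _ _ ↦ Nat.cast_nonneg _) hp hq hpq
    _ ≤ _ := by
      have hlpFst : 0 ≤ lpFst S q := Real.rpow_nonneg (by positivity) _
      gcongr
      exact rpow_sum_degSnd_rpow_le_lpSnd R _ hp

end JoinBounds
end
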